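/- arXiv:1808.04791 — 3 statements merged into one kernel-verified Lean document; each statement's English description precedes it below -/
import Mathlib

section
/- For all α, β, γ : Fin χ, the equilibrium third cumulant is fully determined by the second response coefficients: D[(α, β, γ); ∅] f = ( D[(α); (β, γ)] f + D[(β); (γ, α)] f + D[(γ); (α, β)] f ) − ( D[(α); (β, γ)] g + D[(β); (γ, α)] g + D[(γ); (α, β)] g ). -/
/-- Partial derivative of `F (λ, A)` with respect to the counting parameter `λ_i`. -/
noncomputable def pderivLam {χ : ℕ} (i : Fin χ)
    (F : (Fin χ → ℝ) → (Fin χ → ℝ) → ℝ) : (Fin χ → ℝ) → (Fin χ → ℝ) → ℝ :=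
  fun l a => fderiv ℝ (fun l' => F l' a) l (Pi.single i 1)

/-- Partial derivative of `F (λ, A)` with respect to the affinity `A_i`. -/
noncomputable def pderivAff {χ : ℕ} (i : Fin χ)
    (F : (Fin χ → ℝ) → (Fin χ → ℝ) → ℝ) : (Fin χ → ℝ) → (Fin χ → ℝ) → ℝ :=
  fun l a => fderiv ℝ (fun a' => F l a') a (Pi.single i 1)

/-- Mixed partial derivative `D[α; β] F`: derivatives with respect to the counting
parameters `λ_{α₁}, …, λ_{α_m}` and the affinities `A_{β₁}, …, A_{β_n}`, evaluated at
`(λ, A) = (0, 0)`. -/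
noncomputable def Dmix {χ : ℕ} (α β : List (Fin χ))
    (F : (Fin χ → ℝ) → (Fin χ → ℝ) → ℝ) : ℝ :=
  (List.foldr pderivLam (List.foldr pderivAff F β) α) 0 0

abbrev FRpair (χ : ℕ) : Type := (Fin χ → ℝ) × (Fin χ → ℝ)

/-- Directional derivative on the product space. -/
noncomputable def dirD {χ : ℕ} (v : FRpair χ) (F : FRpair χ → ℝ) : FRpair χ → ℝ :=
  fun p => fderiv ℝ F p v

theorem dirD_smooth {χ : ℕ} (v : FRpair χ) {F : FRpair χ → ℝ}
    (hF : ContDiff ℝ (⊤ : ℕ∞) F) : ContDiff ℝ (⊤ : ℕ∞) (dirD v F) := by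
  have h : ContDiff ℝ (⊤ : ℕ∞) (fderiv ℝ F) := hF.fderiv_right (by simp)
  exact h.clm_apply contDiff_const

theorem smooth_diff {χ : ℕ} {F : FRpair χ → ℝ}
    (hF : ContDiff ℝ (⊤ : ℕ∞) F) : Differentiable ℝ F :=
  hF.differentiable (by simp)

theorem dirD_add {χ : ℕ} (u v : FRpair χ) (F : FRpair χ → ℝ) :
    dirD (u + v) F = dirD u F + dirD v F := by
  funext p; simp [dirD]

theorem dirD_neg {χ : ℕ} (u : FRpair χ) (F : FRpair χ → ℝ) :
    dirD (-u) F = - dirD u F := by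
  funext p; simp [dirD]

theorem dirD_fun_add {χ : ℕ} (u : FRpair χ) {F G : FRpair χ → ℝ}
    (hF : ContDiff ℝ (⊤ : ℕ∞) F) (hG : ContDiff ℝ (⊤ : ℕ∞) G) :
    dirD u (F + G) = dirD u F + dirD u G := by
  funext p
  simp only [dirD, Pi.add_apply]
  rw [fderiv_add (smooth_diff hF p) (smooth_diff hG p)]
  rfl

theorem dirD_fun_neg {χ : ℕ} (u : FRpair χ) (F : FRpair χ → ℝ) :
    dirD u (-F) = - dirD u F := by
  funext p
  simp only [dirD, Pi.neg_apply]
  rw [fderiv_neg]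
  rfl

theorem dirD_comm {χ : ℕ} (u v : FRpair χ) {F : FRpair χ → ℝ}
    (hF : ContDiff ℝ (⊤ : ℕ∞) F) : dirD u (dirD v F) = dirD v (dirD u F) := by
  have h : ContDiff ℝ (⊤ : ℕ∞) (fderiv ℝ F) := hF.fderiv_right (by simp)
  have hd : Differentiable ℝ (fderiv ℝ F) := h.differentiable (by simp)
  have key : ∀ (a b p : FRpair χ), dirD a (dirD b F) p = fderiv ℝ (fderiv ℝ F) p a b := by
    intro a b p
    have := fderiv_clm_apply (hd p) (differentiableAt_const b)
    change fderiv ℝ (fun y => (fderiv ℝ F y) b) p a = _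
    rw [this]
    simp
  funext p
  rw [key, key]
  have hs : IsSymmSndFDerivAt ℝ F p :=
    hF.contDiffAt.isSymmSndFDerivAt (by simp; exact WithTop.coe_le_coe.2 le_top)
  exact hs.eq u v

theorem dirD_comp {χ : ℕ} (T : FRpair χ →L[ℝ] FRpair χ) (u : FRpair χ) {F : FRpair χ → ℝ}
    (hF : ContDiff ℝ (⊤ : ℕ∞) F) : dirD u (F ∘ T) = dirD (T u) F ∘ T := by
  funext p
  have := fderiv_comp (𝕜 := ℝ) p (smooth_diff hF (T p)) T.differentiableAt
  change fderiv ℝ (F ∘ T) p u = fderiv ℝ F (T p) (T u)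
  rw [this]
  simp

theorem uncurry_pderivLam {χ : ℕ} (i : Fin χ) {F : (Fin χ → ℝ) → (Fin χ → ℝ) → ℝ}
    (hF : ContDiff ℝ (⊤ : ℕ∞) (Function.uncurry F)) :
    Function.uncurry (pderivLam i F) = dirD (Pi.single i 1, 0) (Function.uncurry F) := by
  funext ⟨l, a⟩
  have h1 := (smooth_diff hF (l, a)).hasFDerivAt.comp l (hasFDerivAt_prodMk_left (𝕜 := ℝ) l a)
  have h2 : fderiv ℝ (fun l' => F l' a) l = _ := h1.fderiv
  simp only [Function.uncurry_apply_pair, pderivLam, dirD]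
  rw [h2]
  simp

theorem uncurry_pderivAff {χ : ℕ} (i : Fin χ) {F : (Fin χ → ℝ) → (Fin χ → ℝ) → ℝ}
    (hF : ContDiff ℝ (⊤ : ℕ∞) (Function.uncurry F)) :
    Function.uncurry (pderivAff i F) = dirD (0, Pi.single i 1) (Function.uncurry F) := by
  funext ⟨l, a⟩
  have h1 := (smooth_diff hF (l, a)).hasFDerivAt.comp a (hasFDerivAt_prodMk_right (𝕜 := ℝ) l a)
  have h2 : fderiv ℝ (fun a' => F l a') a = _ := h1.fderiv
  simp only [Function.uncurry_apply_pair, pderivAff, dirD]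
  rw [h2]
  simp

theorem Dmix_30 {χ : ℕ} (i j k : Fin χ) {F : (Fin χ → ℝ) → (Fin χ → ℝ) → ℝ}
    (hF : ContDiff ℝ (⊤ : ℕ∞) (Function.uncurry F)) :
    Dmix [i, j, k] [] F = dirD (Pi.single i 1, 0) (dirD (Pi.single j 1, 0)
      (dirD (Pi.single k 1, 0) (Function.uncurry F))) 0 := by
  have e1 := uncurry_pderivLam k hF
  have s1 : ContDiff ℝ (⊤ : ℕ∞) (Function.uncurry (pderivLam k F)) := e1 ▸ dirD_smooth _ hF
  have e2 := uncurry_pderivLam j s1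
  have s2 : ContDiff ℝ (⊤ : ℕ∞) (Function.uncurry (pderivLam j (pderivLam k F))) :=
    e2 ▸ dirD_smooth _ s1
  have e3 := uncurry_pderivLam i s2
  rw [← e1, ← e2, ← e3]
  rfl

theorem Dmix_12 {χ : ℕ} (i j k : Fin χ) {F : (Fin χ → ℝ) → (Fin χ → ℝ) → ℝ}
    (hF : ContDiff ℝ (⊤ : ℕ∞) (Function.uncurry F)) :
    Dmix [i] [j, k] F = dirD (Pi.single i 1, 0) (dirD (0, Pi.single j 1)
      (dirD (0, Pi.single k 1) (Function.uncurry F))) 0 := by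
  have e1 := uncurry_pderivAff k hF
  have s1 : ContDiff ℝ (⊤ : ℕ∞) (Function.uncurry (pderivAff k F)) := e1 ▸ dirD_smooth _ hF
  have e2 := uncurry_pderivAff j s1
  have s2 : ContDiff ℝ (⊤ : ℕ∞) (Function.uncurry (pderivAff j (pderivAff k F))) :=
    e2 ▸ dirD_smooth _ s1
  have e3 := uncurry_pderivLam i s2
  rw [← e1, ← e2, ← e3]
  rfl

theorem YYY_zero {χ : ℕ} (i j k : Fin χ) {F : (Fin χ → ℝ) → (Fin χ → ℝ) → ℝ}
    (hF : ContDiff ℝ (⊤ : ℕ∞) (Function.uncurry F)) (h0 : ∀ A, F 0 A = 0) :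
    dirD (0, Pi.single i 1) (dirD (0, Pi.single j 1)
      (dirD (0, Pi.single k 1) (Function.uncurry F))) 0 = 0 := by
  have z : ∀ (i : Fin χ) (G : (Fin χ → ℝ) → (Fin χ → ℝ) → ℝ), (∀ A, G 0 A = 0) →
      ∀ A, pderivAff i G 0 A = 0 := by
    intro i G hG A
    simp [pderivAff, hG]
  have e1 := uncurry_pderivAff k hF
  have s1 : ContDiff ℝ (⊤ : ℕ∞) (Function.uncurry (pderivAff k F)) := e1 ▸ dirD_smooth _ hF
  have e2 := uncurry_pderivAff j s1
  have s2 : ContDiff ℝ (⊤ : ℕ∞) (Function.uncurry (pderivAff j (pderivAff k F))) :=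
    e2 ▸ dirD_smooth _ s1
  have e3 := uncurry_pderivAff i s2
  rw [← e1, ← e2, ← e3]
  exact z i _ (z j _ (z k _ h0)) 0

/-- The equilibrium third cumulant is fully determined by the second response
coefficients. -/
theorem third_cumulant_from_second_response_coefficients {χ : ℕ} (hχ : 1 ≤ χ)
    (f g : (Fin χ → ℝ) → (Fin χ → ℝ) → ℝ)
    (hf : ContDiff ℝ (⊤ : ℕ∞) (Function.uncurry f))
    (hg : ContDiff ℝ (⊤ : ℕ∞) (Function.uncurry g))
    (hFR : ∀ l A : Fin χ → ℝ, f l A = g (A - l) A)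
    (hfnorm : ∀ A : Fin χ → ℝ, f 0 A = 0)
    (hgnorm : ∀ A : Fin χ → ℝ, g 0 A = 0)
    (α β γ : Fin χ) :
    Dmix [α, β, γ] [] f =
      (Dmix [α] [β, γ] f + Dmix [β] [γ, α] f + Dmix [γ] [α, β] f) -
        (Dmix [α] [β, γ] g + Dmix [β] [γ, α] g + Dmix [γ] [α, β] g) := by
  let T : FRpair χ →L[ℝ] FRpair χ :=
    ContinuousLinearMap.prod (ContinuousLinearMap.snd ℝ _ _ - ContinuousLinearMap.fst ℝ _ _)
      (ContinuousLinearMap.snd ℝ _ _)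
  have hT : ∀ p : FRpair χ, T p = (p.2 - p.1, p.2) := fun p => rfl
  have hfg : Function.uncurry f = Function.uncurry g ∘ T := by
    funext ⟨l, a⟩
    exact hFR l a
  have hB : ∀ u v w : FRpair χ, dirD u (dirD v (dirD w (Function.uncurry f))) 0 =
      dirD (T u) (dirD (T v) (dirD (T w) (Function.uncurry g))) 0 := by
    intro u v w
    rw [hfg, dirD_comp T w hg, dirD_comp T v (dirD_smooth _ hg),
      dirD_comp T u (dirD_smooth _ (dirD_smooth _ hg))]
    simp
  have hY0 := YYY_zero α β γ hf hfnorm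
  have gY0 := YYY_zero α β γ hg hgnorm
  rw [Dmix_30 α β γ hf, Dmix_12 α β γ hf, Dmix_12 β γ α hf, Dmix_12 γ α β hf,
    Dmix_12 α β γ hg, Dmix_12 β γ α hg, Dmix_12 γ α β hg]
  rw [hB] at hY0
  simp only [hB]
  have hX : ∀ i : Fin χ, T (Pi.single i 1, 0) = -(Pi.single i 1, 0) := by
    intro i; simp [hT]
  have hY : ∀ i : Fin χ, T (0, Pi.single i 1) = (Pi.single i 1, 0) + (0, Pi.single i 1) := by
    intro i; simp [hT]
  simp only [hX, hY] at hY0 ⊢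
  generalize hG : Function.uncurry g = G at *
  have add2 : ∀ u v w w' : FRpair χ, dirD u (dirD v (dirD (w + w') G)) 0 =
      dirD u (dirD v (dirD w G)) 0 + dirD u (dirD v (dirD w' G)) 0 := by
    intro u v w w'
    rw [dirD_add, dirD_fun_add _ (dirD_smooth _ hg) (dirD_smooth _ hg),
      dirD_fun_add _ (dirD_smooth _ (dirD_smooth _ hg)) (dirD_smooth _ (dirD_smooth _ hg))]
    rfl
  have s12 : ∀ u v w : FRpair χ, dirD u (dirD v (dirD w G)) 0 =
      dirD v (dirD u (dirD w G)) 0 := by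
    intro u v w
    rw [dirD_comm u v (dirD_smooth _ hg)]
  have s23 : ∀ u v w : FRpair χ, dirD u (dirD v (dirD w G)) 0 =
      dirD u (dirD w (dirD v G)) 0 := by
    intro u v w
    rw [dirD_comm v w hg]
  have neg3 : ∀ u v w : FRpair χ, dirD u (dirD v (dirD (-w) G)) 0 =
      - dirD u (dirD v (dirD w G)) 0 := by
    intro u v w
    rw [dirD_neg, dirD_fun_neg, dirD_fun_neg]
    rfl
  generalize hb : (fun u v w : FRpair χ => dirD u (dirD v (dirD w G)) 0) = B
  have hb' : ∀ u v w : FRpair χ, dirD u (dirD v (dirD w G)) 0 = B u v w := by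
    intro u v w; rw [← hb]
  simp only [hb'] at *
  have addb : ∀ u v v' w, B u (v + v') w = B u v w + B u v' w := by
    intro u v v' w; rw [s23, add2, s23 u w v, s23 u w v']
  have adda : ∀ u u' v w, B (u + u') v w = B u v w + B u' v w := by
    intro u u' v w; rw [s12, addb, s12 v u, s12 v u']
  have negb : ∀ u v w, B u (-v) w = - B u v w := by
    intro u v w; rw [s23, neg3, s23 u w v]
  have nega : ∀ u v w, B (-u) v w = - B u v w := by
    intro u v w; rw [s12, negb, s12 v u]
  simp only [addb, adda, add2, nega, negb, neg3] at hY0 ⊢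
  generalize ((Pi.single α 1, 0) : FRpair χ) = Xa at *
  generalize ((Pi.single β 1, 0) : FRpair χ) = Xb at *
  generalize ((Pi.single γ 1, 0) : FRpair χ) = Xc at *
  generalize ((0, Pi.single α 1) : FRpair χ) = Ya at *
  generalize ((0, Pi.single β 1) : FRpair χ) = Yb at *
  generalize ((0, Pi.single γ 1) : FRpair χ) = Yc at *
  have r1 : ∀ a b c, B b c a = B a b c := by
    intro a b c; rw [s23, s12]
  have r2 : ∀ a b c, B c a b = B a b c := by
    intro a b c; rw [s12, s23]
  rw [r1 Xa Xb Xc, r1 Ya Xb Xc, r1 Xa Xb Yc, r1 Ya Xb Yc,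
    r2 Xa Xb Xc, r2 Xa Yb Xc, r2 Ya Xb Xc, r2 Ya Yb Xc]
  linarith
end

section
/- For all α, β, γ, δ : Fin χ, the first response of the third cumulants satisfies D[(α, β, γ); (δ)] f + D[(α, β, γ); (δ)] g = − D[(α, β, γ, δ); ∅] f; that is, the sum of the first response of the third cumulant at B and at −B equals minus the equilibrium fourth cumulant. -/
abbrev FnSm {χ : ℕ} (F : (Fin χ → ℝ) → (Fin χ → ℝ) → ℝ) : Prop :=
  ContDiff ℝ (⊤ : ℕ∞) (Function.uncurry F)

lemma fnSm_hasFDerivAt {χ : ℕ} {F : (Fin χ → ℝ) → (Fin χ → ℝ) → ℝ} (hF : FnSm F)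
    (p : (Fin χ → ℝ) × (Fin χ → ℝ)) :
    HasFDerivAt (Function.uncurry F) (fderiv ℝ (Function.uncurry F) p) p :=
  ((hF.differentiable (by simp)) p).hasFDerivAt

lemma pderivLam_eq {χ : ℕ} {F : (Fin χ → ℝ) → (Fin χ → ℝ) → ℝ} (hF : FnSm F) (i : Fin χ)
    (l a : Fin χ → ℝ) :
    pderivLam i F l a = fderiv ℝ (Function.uncurry F) (l, a) (Pi.single i 1, 0) := by
  have h := (fnSm_hasFDerivAt hF (l, a)).comp l
    ((hasFDerivAt_id (𝕜 := ℝ) l).prodMk (hasFDerivAt_const a l))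
  have h2 : HasFDerivAt (fun l' => F l' a) _ l := h
  simp [pderivLam, h2.fderiv]

lemma pderivAff_eq {χ : ℕ} {F : (Fin χ → ℝ) → (Fin χ → ℝ) → ℝ} (hF : FnSm F) (i : Fin χ)
    (l a : Fin χ → ℝ) :
    pderivAff i F l a = fderiv ℝ (Function.uncurry F) (l, a) (0, Pi.single i 1) := by
  have h := (fnSm_hasFDerivAt hF (l, a)).comp a
    ((hasFDerivAt_const (𝕜 := ℝ) l a).prodMk (hasFDerivAt_id a))
  have h2 : HasFDerivAt (fun a' => F l a') _ a := h
  simp [pderivAff, h2.fderiv]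

lemma fnSm_pderivLam {χ : ℕ} {F : (Fin χ → ℝ) → (Fin χ → ℝ) → ℝ} (hF : FnSm F) (i : Fin χ) :
    FnSm (pderivLam i F) := by
  have : Function.uncurry (pderivLam i F) =
      fun p => fderiv ℝ (Function.uncurry F) p (Pi.single i 1, 0) := by
    ext ⟨l, a⟩; exact pderivLam_eq hF i l a
  rw [FnSm, this]
  exact (hF.fderiv_right (m := ((⊤ : ℕ∞) : WithTop ℕ∞)) (by simp)).clm_apply contDiff_const

lemma fnSm_pderivAff {χ : ℕ} {F : (Fin χ → ℝ) → (Fin χ → ℝ) → ℝ} (hF : FnSm F) (i : Fin χ) :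
    FnSm (pderivAff i F) := by
  have : Function.uncurry (pderivAff i F) =
      fun p => fderiv ℝ (Function.uncurry F) p (0, Pi.single i 1) := by
    ext ⟨l, a⟩; exact pderivAff_eq hF i l a
  rw [FnSm, this]
  exact (hF.fderiv_right (m := ((⊤ : ℕ∞) : WithTop ℕ∞)) (by simp)).clm_apply contDiff_const

/-- The reflection `F (λ, A) ↦ F (A - λ, A)`. -/
def reflFn {χ : ℕ} (F : (Fin χ → ℝ) → (Fin χ → ℝ) → ℝ) : (Fin χ → ℝ) → (Fin χ → ℝ) → ℝ :=
  fun l a => F (a - l) a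

lemma pderivLam_refl {χ : ℕ} {F : (Fin χ → ℝ) → (Fin χ → ℝ) → ℝ} (hF : FnSm F) (i : Fin χ) :
    pderivLam i (reflFn F) = -reflFn (pderivLam i F) := by
  ext l a
  have h := (fnSm_hasFDerivAt hF (a - l, a)).comp l
    (((hasFDerivAt_id (𝕜 := ℝ) l).const_sub a).prodMk (hasFDerivAt_const a l))
  have h2 : HasFDerivAt (fun l' => reflFn F l' a) _ l := h
  simp only [Pi.neg_apply, reflFn, pderivLam_eq hF]
  rw [pderivLam, h2.fderiv, ← map_neg]
  simp

lemma pderivAff_refl {χ : ℕ} {F : (Fin χ → ℝ) → (Fin χ → ℝ) → ℝ} (hF : FnSm F) (i : Fin χ) :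
    pderivAff i (reflFn F) = reflFn (pderivLam i F + pderivAff i F) := by
  ext l a
  have h := HasFDerivAt.comp (f := fun x : Fin χ → ℝ => (x - l, x)) a
    (fnSm_hasFDerivAt hF (a - l, a))
    (((hasFDerivAt_id (𝕜 := ℝ) a).sub_const l).prodMk (hasFDerivAt_id a))
  have h2 : HasFDerivAt (fun a' => reflFn F l a') _ a := h
  simp only [Pi.add_apply, reflFn, pderivLam_eq hF, pderivAff_eq hF]
  rw [pderivAff, h2.fderiv, ← map_add]
  simp

lemma pderivLam_neg {χ : ℕ} (F : (Fin χ → ℝ) → (Fin χ → ℝ) → ℝ) (i : Fin χ) :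
    pderivLam i (-F) = -pderivLam i F := by
  ext l a
  simp [pderivLam]

lemma pderivLam_add {χ : ℕ} {F G : (Fin χ → ℝ) → (Fin χ → ℝ) → ℝ} (hF : FnSm F) (hG : FnSm G)
    (i : Fin χ) : pderivLam i (F + G) = pderivLam i F + pderivLam i G := by
  ext l a
  have hFG : FnSm (F + G) := ContDiff.add hF hG
  have e : Function.uncurry (F + G) = Function.uncurry F + Function.uncurry G := rfl
  simp only [Pi.add_apply, pderivLam_eq hF, pderivLam_eq hG, pderivLam_eq hFG]
  rw [e, ((fnSm_hasFDerivAt hF (l, a)).add (fnSm_hasFDerivAt hG (l, a))).fderiv]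
  rfl

/-- `Q_{αβγ,δ}(B) + Q_{αβγ,δ}(−B) = − Q_{αβγδ}(0; B)`. -/
theorem response_third_cumulant_from_fourth_cumulant {χ : ℕ} (hχ : 1 ≤ χ)
    (f g : (Fin χ → ℝ) → (Fin χ → ℝ) → ℝ)
    (hf : ContDiff ℝ (⊤ : ℕ∞) (Function.uncurry f))
    (hg : ContDiff ℝ (⊤ : ℕ∞) (Function.uncurry g))
    (hFR : ∀ l A : Fin χ → ℝ, f l A = g (A - l) A)
    (α β γ δ : Fin χ) :
    Dmix [α, β, γ] [δ] f + Dmix [α, β, γ] [δ] g = - Dmix [α, β, γ, δ] [] f := by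
  have e : f = reflFn g := by
    ext l a; exact hFR l a
  subst e
  have L : ∀ {F : (Fin χ → ℝ) → (Fin χ → ℝ) → ℝ} (i : Fin χ), FnSm F → FnSm (pderivLam i F) :=
    fun i h => fnSm_pderivLam h i
  have hA : FnSm (pderivAff δ g) := fnSm_pderivAff hg δ
  have hL : FnSm (pderivLam δ g) := L δ hg
  have hS : FnSm (pderivLam δ g + pderivAff δ g) := ContDiff.add hL hA
  simp only [Dmix, List.foldr]
  rw [pderivAff_refl hg, pderivLam_refl hS, pderivLam_neg, pderivLam_refl (L γ hS), neg_neg,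
    pderivLam_refl (L β (L γ hS)), pderivLam_refl hg, pderivLam_neg, pderivLam_refl hL, neg_neg,
    pderivLam_refl (L γ hL), pderivLam_neg, pderivLam_refl (L β (L γ hL)), neg_neg,
    pderivLam_add hL hA, pderivLam_add (L γ hL) (L γ hA),
    pderivLam_add (L β (L γ hL)) (L β (L γ hA))]
  simp [reflFn]
end

section
/- (Theorem 4, symmetric Euler-coefficient formula.) If Q satisfies the odd-m relations, i.e. for every S ⊆ Fin N with |S| odd one has Q(S) = −(1/2) · Σ_{T ⊆ Sᶜ, T ≠ ∅} Q(S ∪ T), then for every S ⊆ Fin N with |S| odd and Sᶜ ≠ ∅ one has the linear combination Q(S) = Σ_{T ⊆ Sᶜ, |T| odd} e₀(|T|) · Q(S ∪ T), where the sum runs over all nonempty subsets T of Sᶜ of odd cardinality. -/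
/-- The constant term `E_k(0)` of the `k`-th Euler polynomial, for odd `k`,
expressed via Bernoulli numbers: `e₀(k) = 2 (1 − 2^(k+1)) B_{k+1} / (k+1)`. -/
noncomputable def eulerConst (k : ℕ) : ℚ :=
  2 * (1 - 2 ^ (k + 1)) * bernoulli (k + 1) / (k + 1)

open PowerSeries in
lemma euler_series : (PowerSeries.mk fun n => eulerConst n / (n.factorial : ℚ)) * (exp ℚ + 1) = 2 := by
  set G : PowerSeries ℚ := PowerSeries.mk fun n => eulerConst n / (n.factorial : ℚ) with hG
  have hP := bernoulliPowerSeries_mul_exp_sub_one ℚ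
  set P := bernoulliPowerSeries ℚ with hPdef
  have h2 : rescale (2:ℚ) P * (exp ℚ ^ 2 - 1) = 2 * X := by
    have := congrArg (rescale (2:ℚ)) hP
    rw [map_mul, map_sub, map_one, rescale_X] at this
    rw [exp_pow_eq_rescale_exp]
    have e : (C (2:ℚ) : PowerSeries ℚ) = 2 := map_ofNat _ 2
    rw [e] at this
    exact_mod_cast this
  have hX : X * G = 2 * (P - rescale (2:ℚ) P) := by
    have e : (C (2:ℚ) : PowerSeries ℚ) = 2 := map_ofNat _ 2
    rw [← e]
    ext n
    rw [coeff_C_mul, map_sub, coeff_rescale]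
    cases n with
    | zero => simp
    | succ n =>
      rw [coeff_succ_X_mul, hG, coeff_mk, hPdef, bernoulliPowerSeries, coeff_mk, eulerConst,
        Nat.factorial_succ]
      have : (n.factorial : ℚ) ≠ 0 := by positivity
      have : (n + 1 : ℚ) ≠ 0 := by positivity
      simp only [Algebra.algebraMap_self, RingHom.id_apply]
      push_cast
      field_simp
  have hE : (exp ℚ - 1) ≠ 0 := by
    intro h0
    rw [h0, mul_zero] at hP
    exact X_ne_zero hP.symm
  have hne : (X : PowerSeries ℚ) * (exp ℚ - 1) ≠ 0 := mul_ne_zero X_ne_zero hE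
  apply mul_left_cancel₀ hne
  linear_combination (exp ℚ - 1) * (exp ℚ + 1) * hX + 2 * (exp ℚ + 1) * hP - 2 * h2

lemma euler_base (n : ℕ) :
    ∑ k ∈ Finset.range (n + 1), (n.choose k : ℚ) * eulerConst k + eulerConst n
      = if n = 0 then 2 else 0 := by
  have h := congrArg (PowerSeries.coeff n) euler_series
  rw [mul_add, mul_one, map_add, PowerSeries.coeff_mul, PowerSeries.coeff_mk,
    Finset.Nat.sum_antidiagonal_eq_sum_range_succ_mk] at h
  have e : (2 : PowerSeries ℚ) = PowerSeries.C (2:ℚ) := (map_ofNat PowerSeries.C 2).symm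
  rw [e, PowerSeries.coeff_C] at h
  have hn : (n.factorial : ℚ) ≠ 0 := by positivity
  have h' := congrArg (fun x => (n.factorial : ℚ) * x) h
  simp only [mul_add, Finset.mul_sum] at h'
  rw [mul_div_cancel₀ _ hn] at h'
  have : (n.factorial : ℚ) * (if n = 0 then 2 else 0) = if n = 0 then 2 else 0 := by
    split_ifs with h0
    · subst h0; simp
    · simp
  rw [this] at h'
  rw [← h']
  congr 1
  apply Finset.sum_congr rfl
  intro k hk
  have hk : k ≤ n := by simpa [Nat.lt_succ_iff] using hk
  rw [PowerSeries.coeff_mk, PowerSeries.coeff_exp, Nat.cast_choose ℚ hk]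
  simp only [Algebra.algebraMap_self, RingHom.id_apply]
  field_simp

lemma euler_shift (n : ℕ) :
    ∑ k ∈ Finset.range (n + 1), (n.choose k : ℚ) * eulerConst (k + 1) + eulerConst (n + 1)
      = eulerConst n - if n = 0 then 2 else 0 := by
  have h0 := euler_base n
  have h1 := euler_base (n + 1)
  rw [if_neg (Nat.succ_ne_zero n), Finset.sum_range_succ'] at h1
  simp only [Nat.choose_succ_succ, Nat.cast_add, add_mul, Finset.sum_add_distrib] at h1
  have h2 : ∑ k ∈ Finset.range (n + 1), (n.choose k : ℚ) * eulerConst k =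
      ∑ k ∈ Finset.range (n + 1), (n.choose (k+1) : ℚ) * eulerConst (k+1) + eulerConst 0 := by
    rw [Finset.sum_range_succ' _ n, Finset.sum_range_succ _ n]
    simp
  simp at h1 h2
  linarith

lemma euler_even {k : ℕ} (hk : Even k) (h0 : k ≠ 0) : eulerConst k = 0 := by
  rw [eulerConst, bernoulli_eq_zero_of_odd hk.add_one (by omega)]; simp

lemma euler_zero : eulerConst 0 = 1 := by
  norm_num [eulerConst, bernoulli_one]

/-- (Theorem 4, symmetric Euler-coefficient formula.) If `Q` satisfies the
odd-`m` relations, then every odd-`|S|` quantity is the linear combination of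
the even ones with Euler-polynomial constant terms as coefficients. -/
theorem odd_from_even_euler_coefficients (N : ℕ) (hN : 1 ≤ N)
    (Q : Finset (Fin N) → ℝ)
    (h : ∀ S : Finset (Fin N), Odd S.card →
      Q S = -(1 / 2) * ∑ T ∈ Sᶜ.powerset.filter (· ≠ ∅), Q (S ∪ T)) :
    ∀ S : Finset (Fin N), Odd S.card → Sᶜ ≠ ∅ →
      Q S = ∑ T ∈ Sᶜ.powerset.filter (fun T => Odd T.card),
        (eulerConst T.card : ℝ) * Q (S ∪ T) := by
  classical
  intro S hS _
  have hb : ∀ U ∈ Sᶜ.powerset, (eulerConst (U.card + 1) : ℝ) *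
      (Q (S ∪ U) + ∑ V ∈ Sᶜ.powerset with U ⊆ V, Q (S ∪ V)) = 0 := by
    intro U hU
    rw [Finset.mem_powerset] at hU
    have hd : Disjoint S U := by
      rw [Finset.disjoint_left]
      intro x hx hxU
      exact (Finset.mem_compl.1 (hU hxU)) hx
    rcases Nat.even_or_odd U.card with he | ho
    · have h1 := h (S ∪ U) (by rw [Finset.card_union_of_disjoint hd]; exact hS.add_even he)
      have h2 : ∑ T ∈ (S ∪ U)ᶜ.powerset, Q (S ∪ U ∪ T)
          = Q (S ∪ U) + ∑ T ∈ (S ∪ U)ᶜ.powerset.filter (· ≠ ∅), Q (S ∪ U ∪ T) := by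
        rw [Finset.filter_ne', ← Finset.add_sum_erase _ _ (Finset.empty_mem_powerset _),
          Finset.union_empty]
      have h3 : ∑ V ∈ Sᶜ.powerset with U ⊆ V, Q (S ∪ V)
          = ∑ T ∈ (S ∪ U)ᶜ.powerset, Q (S ∪ U ∪ T) := by
        symm
        apply Finset.sum_bij' (fun T _ => U ∪ T) (fun V _ => V \ U)
        · intro T hT
          simp only [Finset.mem_filter, Finset.mem_powerset, Finset.subset_iff, Finset.mem_compl,
            Finset.mem_union] at *
          grind
        · intro T hT
          simp only [Finset.mem_filter, Finset.mem_powerset, Finset.subset_iff, Finset.mem_compl,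
            Finset.mem_union, Finset.mem_sdiff] at *
          grind
        · intro T hT
          simp only [Finset.mem_powerset, Finset.subset_iff, Finset.mem_compl,
            Finset.mem_union] at hT
          ext x
          simp only [Finset.mem_union, Finset.mem_sdiff]
          grind
        · intro V hV
          simp only [Finset.mem_filter] at hV
          exact Finset.union_sdiff_of_subset hV.2
        · intro T hT
          rw [Finset.union_assoc]
      rw [h3, h2]
      have : Q (S ∪ U) + (Q (S ∪ U) + ∑ T ∈ (S ∪ U)ᶜ.powerset.filter (· ≠ ∅), Q (S ∪ U ∪ T)) = 0 := by
        linarith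
      rw [this, mul_zero]
    · rw [euler_even ho.add_one (by omega)]; simp
  have hsum := Finset.sum_eq_zero hb
  simp only [mul_add, Finset.sum_add_distrib, Finset.mul_sum] at hsum
  rw [Finset.sum_comm' (t' := Sᶜ.powerset) (s' := fun V => V.powerset)
    (by
      intro U V
      simp only [Finset.mem_filter, Finset.mem_powerset]
      exact ⟨fun h => ⟨h.2.2, h.2.1⟩, fun h => ⟨h.1.trans h.2, h.2, h.1⟩⟩),
    ← Finset.sum_add_distrib] at hsum
  have hc : ∀ V ∈ Sᶜ.powerset, (eulerConst (V.card + 1) : ℝ) * Q (S ∪ V) +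
      ∑ U ∈ V.powerset, (eulerConst (U.card + 1) : ℝ) * Q (S ∪ V)
      = (if Odd V.card then (eulerConst V.card : ℝ) * Q (S ∪ V) else 0)
        - if V = ∅ then Q S else 0 := by
    intro V _
    rw [← Finset.sum_mul, ← add_mul,
      Finset.sum_powerset_apply_card (fun k => (eulerConst (k + 1) : ℝ))]
    have h1 : (eulerConst (V.card + 1) : ℝ) + ∑ m ∈ Finset.range (V.card + 1),
        V.card.choose m • (eulerConst (m + 1) : ℝ)
        = ((eulerConst V.card - if V.card = 0 then 2 else 0 : ℚ) : ℝ) := by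
      rw [← euler_shift]
      push_cast
      simp only [nsmul_eq_mul]
      ring
    rw [h1]
    rcases Finset.eq_empty_or_nonempty V with rfl | hV
    · simp [euler_zero]; ring
    · have hV0 : V.card ≠ 0 := hV.card_pos.ne'
      rw [if_neg hV0, if_neg hV.ne_empty]
      split_ifs with ho
      · simp
      · rw [euler_even (Nat.not_odd_iff_even.1 ho) hV0]; simp
  rw [Finset.sum_congr rfl hc, Finset.sum_sub_distrib, ← Finset.sum_filter,
    Finset.sum_ite_eq' ] at hsum
  simp only [Finset.empty_mem_powerset, if_true] at hsum
  linarith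
end
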